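/- arXiv:2412.16109 — 2 statements merged into one kernel-verified Lean document; each statement's English description precedes it below -/
import Mathlib

section
/- Assume the domain, weight, localization and mollifier setting below with d ≥ 1, p ∈ (1,∞), and β ∈ ℝ, and assume additionally that ψ is continuously differentiable on ℝ and that λ is continuously differentiable on Ω with |∇λ(x)| ≤ κ₁ for all x ∈ Ω. Then there exists a constant C₂, depending only on d, p, β, ψ, κ₀ and κ₁, such that for every δ ∈ (0, 1/(3κ₀²κ₁)) and every measurable u : Ω → ℝ with ∫_Ω |u(x)|^p γ(x)^{−β} dx < ∞, the function K_δ u is differentiable on Ω and ( ∫_Ω |∇K_δ u(x)|^p γ(x)^{−β} dx )^{1/p} ≤ C₂ · [u]_{𝔚^p[δ](Ω;β)}. -/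
/-!
Gradient bound in weighted `L^p` for a convolution whose radius `δ λ(x)` shrinks at the boundary.

Write `R = δ λ(x₀)`, `r = δ η(x₀)`. Since `3 R ≤ η(x₀)`, the kernels centred near `x₀` live inside
`Ω` and have mass one, so near `x₀` the convolution of `u` equals the convolution of `u - u(x₀)`
plus the constant `u(x₀)`. Differentiating under the integral sign, and using that the kernel
gradient is supported in `ball x₀ R` and bounded by `C R^(-d-1)`, one gets
`|∇ K_δ u (x₀)| ≤ C R^(-d-1) ∫_{ball x₀ R} |u(y) - u(x₀)| dy` (`hasFDerivAt_convolution`). By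
Jensen's inequality (`lintegral_rpow_le`) and `r / κ₀ ≤ R ≤ κ₀ r` the `p`-th power is at most
`C r^(-d-p) ∫_{ball x₀ (κ₀ r)} |u(y) - u(x₀)|^p dy`.

This is the integrand of the seminorm, but over the ball of radius `κ₀ r` in place of `r`. The
excess radius is removed by `chaining`: with `y = x + z` and `N ≥ 2 κ₀`, the difference
`u(x + z) - u(x)` is the sum of `N` increments of step `z / N`, each of which is brought back to
the form `u(x + z) - u(x)` by Tonelli, a translation in `x` and a dilation in `z`. The weights
`γ^(-β)` and `r^(-d-p)` at `x` and `x + s z` are comparable (`weights_comparable`): `|z| ≤ κ₀ δ η(x)`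
is small compared with `η(x)`, and `η ≤ dist(·, Γ) ≤ κ₀ γ` because `Γ` lies outside `Ω`.
-/

open MeasureTheory Metric Set Filter
open scoped ENNReal NNReal Topology

noncomputable section

/-- Euclidean space `ℝ^d`. -/
abbrev Euc (d : ℕ) : Type := EuclideanSpace ℝ (Fin d)

/-- The constant `C̄_{d,p} = √π Γ((d+p)/2) / (Γ((p+1)/2) Γ(d/2))`. -/
def Cbar (d : ℕ) (p : ℝ) : ℝ :=
  Real.sqrt Real.pi * Real.Gamma (((d : ℝ) + p) / 2) /
    (Real.Gamma ((p + 1) / 2) * Real.Gamma ((d : ℝ) / 2))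

/-- The surface measure `σ(𝕊^{d-1}) = 2 π^{d/2} / Γ(d/2)` of the unit sphere in `ℝ^d`. -/
def sphArea (d : ℕ) : ℝ := 2 * Real.pi ^ ((d : ℝ) / 2) / Real.Gamma ((d : ℝ) / 2)

/-- The normalizing constant `C̄_{d,p} (d+p) / σ(𝕊^{d-1})` of the nonlocal seminorm. -/
def normC (d : ℕ) (p : ℝ) : ℝ := Cbar d p * ((d : ℝ) + p) / sphArea d

/-- The distance `η(x) = dist(x, ∂Ω)` to the boundary of `Ω`. -/
def etaD {d : ℕ} (Ω : Set (Euc d)) (x : Euc d) : ℝ := Metric.infDist x (frontier Ω)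

/-- The `p`-th power `[u]_{𝔚^p[δ](Ω;β)}^p` of the weighted nonlocal seminorm. -/
def nlEnergy (d : ℕ) (Ω : Set (Euc d)) (γ : Euc d → ℝ) (p β δ : ℝ) (u : Euc d → ℝ) : ℝ≥0∞ :=
  ENNReal.ofReal (normC d p) *
    ∫⁻ x in Ω, ∫⁻ y in ball x (δ * etaD Ω x),
      ENNReal.ofReal (γ x ^ (-β) * |u y - u x| ^ p / (δ * etaD Ω x) ^ ((d : ℝ) + p))

/-- The weighted nonlocal seminorm `[u]_{𝔚^p[δ](Ω;β)}`. -/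
def semiW (d : ℕ) (Ω : Set (Euc d)) (γ : Euc d → ℝ) (p β δ : ℝ) (u : Euc d → ℝ) : ℝ≥0∞ :=
  nlEnergy d Ω γ p β δ u ^ (1 / p)


/-- The boundary-localized convolution
`K_δ u(x) := ∫_Ω λ_δ(x)^{-d} ψ(|y-x|/λ_δ(x)) u(y) dy`, where `λ_δ(x) = δ·λ(x)`. -/
def Kconv (d : ℕ) (Ω : Set (Euc d)) (lam : Euc d → ℝ) (ψ : ℝ → ℝ) (δ : ℝ)
    (u : Euc d → ℝ) (x : Euc d) : ℝ :=
  ∫ y in Ω, ψ (‖y - x‖ / (δ * lam x)) / (δ * lam x) ^ d * u y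

/-! ### Distance to the boundary -/

/-- The distance from a point of `Ω` to `∂Ω` is at most its distance to any point outside `Ω`,
because the segment joining the two meets `∂Ω`. -/
lemma etaD_le_dist {d : ℕ} {Ω : Set (Euc d)} {x y : Euc d} (hx : x ∈ Ω) (hy : y ∉ Ω) :
    etaD Ω x ≤ dist x y := by
  obtain ⟨z, hz, hzf⟩ : ∃ z ∈ segment ℝ x y, z ∈ frontier Ω := by
    by_contra! hcon
    have hcov : segment ℝ x y ⊆ interior Ω ∪ (closure Ω)ᶜ := by
      intro z hz
      by_contra hz'
      rw [mem_union, not_or, notMem_compl_iff] at hz'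
      exact hcon z hz ⟨hz'.2, hz'.1⟩
    have hxi : x ∈ interior Ω := (hcov (left_mem_segment ℝ x y)).resolve_right
      fun h => h (subset_closure hx)
    have hyc : y ∈ (closure Ω)ᶜ := (hcov (right_mem_segment ℝ x y)).resolve_left
      fun h => hy (interior_subset h)
    obtain ⟨z, -, hz1, hz2⟩ := (convex_segment (𝕜 := ℝ) x y).isPreconnected _ _ isOpen_interior
      isClosed_closure.isOpen_compl hcov ⟨x, left_mem_segment ℝ x y, hxi⟩
      ⟨y, right_mem_segment ℝ x y, hyc⟩
    exact hz2 (subset_closure (interior_subset hz1))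
  refine (infDist_le_dist_of_mem hzf).trans ?_
  have := dist_add_dist_of_mem_segment hz
  linarith [dist_nonneg (x := z) (y := y)]

lemma etaD_lipschitz {d : ℕ} (Ω : Set (Euc d)) (x y : Euc d) :
    |etaD Ω x - etaD Ω y| ≤ ‖x - y‖ := by
  have := (lipschitz_infDist_pt (frontier Ω)).dist_le_mul x y
  simpa [Real.dist_eq, dist_eq_norm, etaD] using this

/-! ### Jensen's inequality and the reduction of the radius -/

/-- Jensen's inequality on a set, without normalization. -/
lemma lintegral_rpow_le {α : Type*} [MeasurableSpace α] (μ : Measure α) {p : ℝ} (hp : 1 < p)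
    {f : α → ℝ≥0∞} (hf : AEMeasurable f μ) :
    (∫⁻ a, f a ∂μ) ^ p ≤ μ univ ^ (p - 1) * ∫⁻ a, f a ^ p ∂μ := by
  have hpq := Real.HolderConjugate.conjExponent hp
  have h := ENNReal.lintegral_mul_le_Lp_mul_Lq μ hpq hf (aemeasurable_const (b := (1 : ℝ≥0∞)))
  have hp0 : 0 < p := by linarith
  have h2 := ENNReal.rpow_le_rpow h hp0.le
  simp only [Pi.mul_apply, mul_one, ENNReal.one_rpow, lintegral_one] at h2
  refine h2.trans (le_of_eq ?_)
  rw [ENNReal.mul_rpow_of_nonneg _ _ hp0.le, ← ENNReal.rpow_mul, ← ENNReal.rpow_mul, mul_comm]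
  have e1 : 1 / p * p = 1 := by field_simp
  have e2 : 1 / p.conjExponent * p = p - 1 := by
    unfold Real.conjExponent
    have : p - 1 ≠ 0 := by linarith
    field_simp
  rw [e1, e2, ENNReal.rpow_one]

/-- Chaining: a difference `u (x + z) - u x` is telescoped into `N` increments of step `z / N`.
If the weight `G₁` at `(x, z)` is controlled by `G₂` at `(x + s z, z / N)` for all `s ∈ [0, 1]`,
then each increment is returned to the base point by a translation in `x` and a dilation in `z`. -/
lemma chaining {d : ℕ} {p : ℝ} (hp : 1 ≤ p) {u : Euc d → ℝ} (hu : Measurable u)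
    {N : ℕ} (hN : 0 < N) (c : ℝ≥0∞) {G₁ G₂ : Euc d → Euc d → ℝ≥0∞}
    (hG₂ : Measurable (Function.uncurry G₂))
    (h : ∀ x z, ∀ s ∈ Icc (0 : ℝ) 1, G₁ x z ≤ c * G₂ (x + s • z) ((N : ℝ)⁻¹ • z)) :
    ∫⁻ x, ∫⁻ z, G₁ x z * ‖u (x + z) - u x‖ₑ ^ p ≤
      (N : ℝ≥0∞) ^ (p - 1) * (N * (c * (ENNReal.ofReal ((N : ℝ) ^ d) *
        ∫⁻ x, ∫⁻ z, G₂ x z * ‖u (x + z) - u x‖ₑ ^ p))) := by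
  set H : Euc d → Euc d → ℝ≥0∞ := fun x z => G₂ x z * ‖u (x + z) - u x‖ₑ ^ p with hH
  have hNr : (0 : ℝ) < N := by exact_mod_cast hN
  have hHm : Measurable (Function.uncurry H) := by
    have : Measurable (fun q : Euc d × Euc d => ‖u (q.1 + q.2) - u q.1‖ₑ ^ p) := by fun_prop
    exact hG₂.mul this
  have hHm' : ∀ s r : ℝ, Measurable (fun q : Euc d × Euc d => H (q.1 + s • q.2) (r • q.2)) := by
    intro s r
    exact hHm.comp (by fun_prop : Measurable
      (fun q : Euc d × Euc d => (q.1 + s • q.2, r • q.2)))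
  have hpt : ∀ x z, G₁ x z * ‖u (x + z) - u x‖ₑ ^ p ≤
      (N : ℝ≥0∞) ^ (p - 1) * ∑ j ∈ Finset.range N,
        c * H (x + ((j : ℝ) / N) • z) ((N : ℝ)⁻¹ • z) := by
    intro x z
    have htel : u (x + z) - u x = ∑ j ∈ Finset.range N,
        (u ((x + ((j : ℝ) / N) • z) + (N : ℝ)⁻¹ • z) - u (x + ((j : ℝ) / N) • z)) := by
      have := Finset.sum_range_sub (fun j : ℕ => u (x + ((j : ℝ) / N) • z)) N
      simp only [Nat.cast_zero, zero_div, zero_smul, add_zero, div_self hNr.ne', one_smul] at this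
      rw [← this]
      refine Finset.sum_congr rfl fun j _ => ?_
      have : x + (((j + 1 : ℕ) : ℝ) / N) • z = (x + ((j : ℝ) / N) • z) + (N : ℝ)⁻¹ • z := by
        rw [add_assoc, ← add_smul]; congr 2; push_cast; ring
      rw [this]
    have h1 : ‖u (x + z) - u x‖ₑ ^ p ≤ (N : ℝ≥0∞) ^ (p - 1) * ∑ j ∈ Finset.range N,
        ‖u ((x + ((j : ℝ) / N) • z) + (N : ℝ)⁻¹ • z) - u (x + ((j : ℝ) / N) • z)‖ₑ ^ p := by
      rw [htel]
      refine (ENNReal.rpow_le_rpow (enorm_sum_le _ _) (by linarith)).trans ?_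
      have := ENNReal.rpow_sum_le_const_mul_sum_rpow (Finset.range N) (fun j : ℕ =>
        ‖u ((x + ((j : ℝ) / N) • z) + (N : ℝ)⁻¹ • z) - u (x + ((j : ℝ) / N) • z)‖ₑ) hp
      simpa using this
    refine (mul_le_mul_right h1 _).trans ?_
    rw [mul_left_comm, Finset.mul_sum]
    refine mul_le_mul_right (Finset.sum_le_sum fun j hj => ?_) _
    rw [hH, ← mul_assoc]
    refine mul_le_mul_left (h x z _ ⟨by positivity, ?_⟩) _
    rw [div_le_one hNr]
    exact_mod_cast (Finset.mem_range.mp hj).le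
  -- Translation invariance in `x`, then scaling in `z`.
  have hterm : ∀ s : ℝ, ∫⁻ x, ∫⁻ z, H (x + s • z) ((N : ℝ)⁻¹ • z) =
      ENNReal.ofReal ((N : ℝ) ^ d) * ∫⁻ x, ∫⁻ z, H x z := by
    intro s
    rw [lintegral_lintegral_swap (hHm' s _).aemeasurable]
    simp_rw [fun z : Euc d => lintegral_add_right_eq_self (μ := (volume : Measure (Euc d)))
      (fun x => H x ((N : ℝ)⁻¹ • z)) (s • z)]
    rw [lintegral_lintegral_swap]
    swap
    · have := (hHm' 0 (N : ℝ)⁻¹).comp measurable_swap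
      simpa [Function.comp_def, Function.uncurry_def] using this.aemeasurable
    have hI : Measurable fun x => ∫⁻ z, H x z := hHm.lintegral_prod_right'
    rw [← lintegral_const_mul _ hI]
    refine lintegral_congr fun x => ?_
    have hHx : Measurable (H x) := hHm.of_uncurry_left
    rw [← lintegral_map (g := fun z : Euc d => (N : ℝ)⁻¹ • z) hHx (by fun_prop),
      Measure.map_addHaar_smul _ (inv_ne_zero hNr.ne'), lintegral_smul_measure]
    simp [abs_of_pos hNr]
  calc _ ≤ ∫⁻ x, ∫⁻ z, (N : ℝ≥0∞) ^ (p - 1) * ∑ j ∈ Finset.range N,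
        c * H (x + ((j : ℝ) / N) • z) ((N : ℝ)⁻¹ • z) :=
        lintegral_mono fun x => lintegral_mono fun z => hpt x z
    _ = (N : ℝ≥0∞) ^ (p - 1) * ∑ j ∈ Finset.range N,
        c * ∫⁻ x, ∫⁻ z, H (x + ((j : ℝ) / N) • z) ((N : ℝ)⁻¹ • z) := by
        have m1 : ∀ (s : ℝ) (x : Euc d), Measurable fun z => H (x + s • z) ((N : ℝ)⁻¹ • z) :=
          fun s x => (hHm' s _).of_uncurry_left (f := fun x z => H (x + s • z) ((N : ℝ)⁻¹ • z))
        have m2 : ∀ s : ℝ, Measurable fun x => ∫⁻ z, H (x + s • z) ((N : ℝ)⁻¹ • z) :=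
          fun s => (hHm' s _).lintegral_prod_right'
        have e : ∀ x, ∫⁻ z, (N : ℝ≥0∞) ^ (p - 1) * ∑ j ∈ Finset.range N,
            c * H (x + ((j : ℝ) / N) • z) ((N : ℝ)⁻¹ • z) =
            (N : ℝ≥0∞) ^ (p - 1) * ∑ j ∈ Finset.range N,
            c * ∫⁻ z, H (x + ((j : ℝ) / N) • z) ((N : ℝ)⁻¹ • z) := by
          intro x
          rw [lintegral_const_mul _ (Finset.measurable_fun_sum _ fun j _ => (m1 _ x).const_mul c),
            lintegral_finsetSum _ fun j _ => (m1 _ x).const_mul c]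
          congr 1
          exact Finset.sum_congr rfl fun j _ => lintegral_const_mul c (m1 _ x)
        rw [lintegral_congr e,
          lintegral_const_mul _ (Finset.measurable_fun_sum _ fun j _ => (m2 _).const_mul c),
          lintegral_finsetSum _ fun j _ => (m2 _).const_mul c]
        congr 1
        exact Finset.sum_congr rfl fun j _ => lintegral_const_mul c (m2 _)
    _ = _ := by
        simp_rw [hterm]
        simp [hH]

/-! ### Differentiating the localized convolution -/

/-- A `C¹` mollifier profile that is even, nonincreasing on `[0, ∞)` and vanishes outside `(-1, 1)`
has a differentiable radial extension. At the origin the derivative exists because `ψ' (0) = 0`;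
on and outside the unit sphere it vanishes because the extension attains its minimum `0` there. -/
lemma radial_profile (d : ℕ) {ψ : ℝ → ℝ} (hψnn : ∀ x, 0 ≤ ψ x) (hψC1 : ContDiff ℝ 1 ψ)
    (hψbdd : ∃ M : ℝ, ∀ x, ψ x ≤ M) (hψeven : ∀ x, ψ (-x) = ψ x)
    (hψmono : AntitoneOn ψ (Set.Ici 0)) (hψsupp : ∀ x : ℝ, 1 ≤ |x| → ψ x = 0) :
    ∃ M : ℝ, 0 < M ∧ (∀ z : Euc d, |ψ ‖z‖| ≤ M) ∧ Differentiable ℝ (fun z : Euc d => ψ ‖z‖) ∧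
      (∀ z, ‖fderiv ℝ (fun z : Euc d => ψ ‖z‖) z‖ ≤ M) ∧
      (∀ z : Euc d, 1 ≤ ‖z‖ → ψ ‖z‖ = 0) ∧
      (∀ z : Euc d, 1 ≤ ‖z‖ → fderiv ℝ (fun z : Euc d => ψ ‖z‖) z = 0) := by
  obtain ⟨M₀, hM₀⟩ := hψbdd
  have hcs : HasCompactSupport ψ := by
    refine HasCompactSupport.intro (isCompact_Icc (a := (-1 : ℝ)) (b := 1)) fun x hx => ?_
    refine hψsupp x ?_
    by_contra! h
    exact hx ⟨(abs_lt.mp h).1.le, (abs_lt.mp h).2.le⟩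
  obtain ⟨K, hK⟩ := hψC1.lipschitzWith_of_hasCompactSupport hcs one_ne_zero
  have hd1 : Differentiable ℝ ψ := hψC1.differentiable one_ne_zero
  have hzero : ∀ z : Euc d, 1 ≤ ‖z‖ → ψ ‖z‖ = 0 := fun z hz => hψsupp _ (by simpa using hz)
  refine ⟨max M₀ K + 1, ?_, ?_, ?_, ?_, hzero, ?_⟩
  · have : (0 : ℝ) ≤ K := K.2
    linarith [le_max_right M₀ (K : ℝ)]
  · intro z
    rw [abs_of_nonneg (hψnn _)]
    linarith [hM₀ ‖z‖, le_max_left M₀ (K : ℝ)]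
  · intro z
    rcases eq_or_ne z 0 with rfl | hz
    · have hmax : IsLocalMax ψ 0 := by
        refine Filter.Eventually.of_forall fun t => ?_
        rcases le_total 0 t with h | h
        · exact hψmono self_mem_Ici h h
        · rw [← hψeven t]
          exact hψmono self_mem_Ici (by simpa using h) (by simpa using h)
      have h0 : HasDerivAt ψ 0 0 := by
        have := (hd1 0).hasDerivAt
        rwa [hmax.deriv_eq_zero] at this
      have : HasFDerivAt (fun z : Euc d => ψ ‖z‖) (0 : Euc d →L[ℝ] ℝ) 0 := by
        rw [hasFDerivAt_iff_isLittleO_nhds_zero]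
        have h1 := (hasDerivAt_iff_isLittleO_nhds_zero.mp h0)
        have h2 := h1.comp_tendsto (tendsto_norm_zero (E := Euc d))
        exact Asymptotics.isLittleO_norm_right.mp (by simpa [Function.comp_def] using h2)
      exact this.differentiableAt
    · exact (hd1 _).comp z ((contDiffAt_norm ℝ hz (n := 1)).differentiableAt one_ne_zero)
  · intro z
    have hlip : LipschitzWith (K * 1) (ψ ∘ fun z : Euc d => ‖z‖) :=
      hK.comp lipschitzWith_one_norm
    have := norm_fderiv_le_of_lipschitz ℝ hlip (x₀ := z)
    simp only [mul_one, Function.comp_def] at this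
    linarith [le_max_right M₀ (K : ℝ)]
  · intro z hz
    refine IsLocalMin.fderiv_eq_zero (Filter.Eventually.of_forall fun w => ?_)
    simp only [hzero z hz]
    exact hψnn _

/-- The derivative in `x` of the kernel `Φ ((y - x) / L x) (L x)⁻ᵈ`, as a function of the
radius `r = L x`, the derivative `L'` of `L` at `x`, and `w = y - x`. -/
def kerD {d : ℕ} (Φ : Euc d → ℝ) (r : ℝ) (L' : Euc d →L[ℝ] ℝ) (w : Euc d) : Euc d →L[ℝ] ℝ :=
  r⁻¹ ^ d • (-(r⁻¹ • fderiv ℝ Φ (r⁻¹ • w)) - (r⁻¹ ^ 2 * fderiv ℝ Φ (r⁻¹ • w) w) • L')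
    - (Φ (r⁻¹ • w) * (d * r⁻¹ ^ (d + 1))) • L'

lemma hasFDerivAt_kernel {d : ℕ} {Φ : Euc d → ℝ} (hΦ : Differentiable ℝ Φ) {L : Euc d → ℝ}
    {x y : Euc d} (hL : DifferentiableAt ℝ L x) (hx : 0 < L x) :
    HasFDerivAt (fun x => Φ ((L x)⁻¹ • (y - x)) * (L x)⁻¹ ^ d)
      (kerD Φ (L x) (fderiv ℝ L x) (y - x)) x := by
  have hs : HasFDerivAt (fun x => (L x)⁻¹) (-((L x)⁻¹ ^ 2) • fderiv ℝ L x) x := by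
    have := (hasDerivAt_inv hx.ne').comp_hasFDerivAt x hL.hasFDerivAt
    simpa [Function.comp_def] using this
  have hw : HasFDerivAt (fun x : Euc d => y - x) (-ContinuousLinearMap.id ℝ (Euc d)) x := by
    simpa using (hasFDerivAt_id x).const_sub y
  have h1 := ((hΦ ((L x)⁻¹ • (y - x))).hasFDerivAt).comp x (hs.smul hw)
  have h2 := h1.mul (hs.pow d)
  refine h2.congr_fderiv ?_
  ext v
  rcases d with _ | d
  · simp [kerD]; ring
  · simp [kerD]; ring

lemma kerD_eq_zero {d : ℕ} {Φ : Euc d → ℝ} (h0 : ∀ z : Euc d, 1 ≤ ‖z‖ → Φ z = 0)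
    (h0' : ∀ z : Euc d, 1 ≤ ‖z‖ → fderiv ℝ Φ z = 0) {r : ℝ} (hr : 0 < r)
    (L' : Euc d →L[ℝ] ℝ) {w : Euc d} (hw : r ≤ ‖w‖) : kerD Φ r L' w = 0 := by
  have : 1 ≤ ‖r⁻¹ • w‖ := by
    rw [norm_smul, Real.norm_of_nonneg (inv_nonneg.mpr hr.le), inv_mul_eq_div, one_le_div hr]
    exact hw
  simp [kerD, h0 _ this, h0' _ this]

lemma norm_kerD_le {d : ℕ} {Φ : Euc d → ℝ} {M : ℝ} (hM : ∀ z, |Φ z| ≤ M)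
    (hM' : ∀ z, ‖fderiv ℝ Φ z‖ ≤ M) (h0 : ∀ z : Euc d, 1 ≤ ‖z‖ → Φ z = 0)
    (h0' : ∀ z : Euc d, 1 ≤ ‖z‖ → fderiv ℝ Φ z = 0) {r : ℝ} (hr : 0 < r)
    {L' : Euc d →L[ℝ] ℝ} (hL' : ‖L'‖ ≤ 1) (w : Euc d) :
    ‖kerD Φ r L' w‖ ≤ (2 + d) * M * r⁻¹ ^ (d + 1) := by
  have hMn : 0 ≤ M := (abs_nonneg _).trans (hM 0)
  rcases le_or_gt r ‖w‖ with hw | hw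
  · rw [kerD_eq_zero h0 h0' hr L' hw, norm_zero]; positivity
  have hσ : 0 < r⁻¹ := inv_pos.mpr hr
  set σ := r⁻¹ with hσd
  have a1 : ‖σ • fderiv ℝ Φ (σ • w)‖ ≤ σ * M := by
    rw [norm_smul, Real.norm_of_nonneg hσ.le]; gcongr; exact hM' _
  have a2 : ‖(σ ^ 2 * fderiv ℝ Φ (σ • w) w) • L'‖ ≤ σ * M := by
    rw [norm_smul, norm_mul, Real.norm_of_nonneg (by positivity : 0 ≤ σ ^ 2)]
    have : ‖fderiv ℝ Φ (σ • w) w‖ ≤ M * r :=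
      (ContinuousLinearMap.le_opNorm _ _).trans (by gcongr; exact hM' _)
    calc σ ^ 2 * ‖fderiv ℝ Φ (σ • w) w‖ * ‖L'‖ ≤ σ ^ 2 * (M * r) * 1 := by gcongr
      _ = σ * M := by rw [hσd]; field_simp
  have a3 : ‖(Φ (σ • w) * (d * σ ^ (d + 1))) • L'‖ ≤ M * (d * σ ^ (d + 1)) := by
    rw [norm_smul, norm_mul, Real.norm_of_nonneg (by positivity : 0 ≤ (d : ℝ) * σ ^ (d + 1))]
    calc _ ≤ M * (d * σ ^ (d + 1)) * 1 := by gcongr; exact hM _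
      _ = _ := mul_one _
  calc ‖kerD Φ r L' w‖ ≤ σ ^ d * (σ * M + σ * M) + M * (d * σ ^ (d + 1)) := by
        unfold kerD
        refine (norm_sub_le _ _).trans (add_le_add ?_ a3)
        rw [norm_smul, Real.norm_of_nonneg (by positivity : 0 ≤ σ ^ d)]
        gcongr
        refine (norm_sub_le _ _).trans (add_le_add ?_ a2)
        rwa [norm_neg]
    _ = _ := by ring

lemma measurable_kerD {d : ℕ} {Φ : Euc d → ℝ} (hΦ : Measurable Φ) (r : ℝ)
    (L' : Euc d →L[ℝ] ℝ) : Measurable (kerD Φ r L') := by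
  have hf : Measurable fun w : Euc d => fderiv ℝ Φ (r⁻¹ • w) :=
    (measurable_fderiv ℝ Φ).comp (measurable_const_smul r⁻¹)
  have hfw : Measurable fun w : Euc d => fderiv ℝ Φ (r⁻¹ • w) w :=
    (isBoundedBilinearMap_apply (𝕜 := ℝ) (E := Euc d) (F := ℝ)).continuous.measurable.comp
      (hf.prodMk measurable_id)
  have hΦw : Measurable fun w : Euc d => Φ (r⁻¹ • w) := hΦ.comp (measurable_const_smul r⁻¹)
  unfold kerD
  have h1 : Measurable fun w : Euc d => -(r⁻¹ • fderiv ℝ Φ (r⁻¹ • w)) := (hf.const_smul r⁻¹).neg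
  have h2 : Measurable fun w : Euc d => (r⁻¹ ^ 2 * fderiv ℝ Φ (r⁻¹ • w) w) • L' :=
    (hfw.const_mul _).smul_const L'
  exact ((h1.sub h2).const_smul (r⁻¹ ^ d)).sub ((hΦw.mul_const _).smul_const _)

/-- The rescaled kernel has mass one on `Ω` as soon as its support lies in `Ω`. -/
lemma setIntegral_kernel {d : ℕ} {Φ : Euc d → ℝ} (h0 : ∀ z : Euc d, 1 ≤ ‖z‖ → Φ z = 0)
    (hint : ∫ z, Φ z = 1) {Ω : Set (Euc d)} {x : Euc d} {r : ℝ} (hr : 0 < r)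
    (hsub : ball x r ⊆ Ω) : ∫ y in Ω, Φ (r⁻¹ • (y - x)) * r⁻¹ ^ d = 1 := by
  rw [setIntegral_eq_integral_of_forall_compl_eq_zero]
  · rw [integral_mul_const, integral_sub_right_eq_self (fun w => Φ (r⁻¹ • w)) x,
      Measure.integral_comp_inv_smul_of_nonneg _ _ hr.le, hint]
    simp [hr.ne']
  · intro y hy
    rw [h0, zero_mul]
    have : r ≤ ‖y - x‖ := by
      by_contra! h
      exact hy (hsub (by rwa [mem_ball, dist_eq_norm]))
    rw [norm_smul, Real.norm_of_nonneg (inv_nonneg.mpr hr.le), inv_mul_eq_div, one_le_div hr]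
    exact this

/-- Differentiation under the integral sign. Since the kernel has constant mass one near `x₀`,
the constant `u x₀` may be subtracted from `u` in the formula for the derivative. -/
lemma hasFDerivAt_convolution {d : ℕ} {Φ : Euc d → ℝ} {M : ℝ} (hM : ∀ z, |Φ z| ≤ M)
    (hΦ : Differentiable ℝ Φ) (hM' : ∀ z, ‖fderiv ℝ Φ z‖ ≤ M)
    (h0 : ∀ z : Euc d, 1 ≤ ‖z‖ → Φ z = 0) (h0' : ∀ z : Euc d, 1 ≤ ‖z‖ → fderiv ℝ Φ z = 0)
    (hint : ∫ z, Φ z = 1) {Ω : Set (Euc d)} (hΩ : MeasurableSet Ω) {L : Euc d → ℝ} {x₀ : Euc d}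
    (hR : 0 < L x₀) (hsub : ball x₀ (2 * L x₀) ⊆ Ω)
    (hL : ∀ x ∈ ball x₀ (L x₀ / 2),
      |L x - L x₀| ≤ L x₀ / 2 ∧ DifferentiableAt ℝ L x ∧ ‖fderiv ℝ L x‖ ≤ 1)
    {u : Euc d → ℝ} (hui : IntegrableOn u (ball x₀ (2 * L x₀))) :
    ∃ D : Euc d →L[ℝ] ℝ,
      HasFDerivAt (fun x => ∫ y in Ω, Φ ((L x)⁻¹ • (y - x)) * (L x)⁻¹ ^ d * u y) D x₀ ∧
      ‖D‖ₑ ≤ ENNReal.ofReal ((2 + d) * M * (L x₀)⁻¹ ^ (d + 1)) *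
        ∫⁻ y in ball x₀ (L x₀), ‖u y - u x₀‖ₑ := by
  set R := L x₀ with hRdef
  have hMn : 0 ≤ M := (abs_nonneg _).trans (hM 0)
  have hΦm : Measurable Φ := hΦ.continuous.measurable
  have hpos : ∀ x ∈ ball x₀ (R / 2), R / 2 ≤ L x ∧ L x ≤ 3 / 2 * R := fun x hx => by
    have := abs_le.mp (hL x hx).1
    constructor <;> linarith
  have hballs : ∀ x ∈ ball x₀ (R / 2), ball x (L x) ⊆ ball x₀ (2 * R) := fun x hx =>
    ball_subset_ball' (by have := (hpos x hx).2; have := mem_ball.mp hx; linarith)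
  -- Outside `ball x₀ (2 R)` the point `y` is out of reach of every kernel centred near `x₀`.
  have hfar : ∀ x ∈ ball x₀ (R / 2), ∀ y ∉ ball x₀ (2 * R), L x ≤ ‖y - x‖ := by
    intro x hx y hy
    by_contra! h
    exact hy (hballs x hx (by rwa [mem_ball, dist_eq_norm]))
  have hkm : ∀ x, Measurable fun y => Φ ((L x)⁻¹ • (y - x)) * (L x)⁻¹ ^ d := fun x => by
    have : Measurable fun y : Euc d => (L x)⁻¹ • (y - x) := by fun_prop
    exact (hΦm.comp this).mul_const _
  have hk0 : ∀ x ∈ ball x₀ (R / 2), ∀ y ∉ ball x₀ (2 * R),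
      Φ ((L x)⁻¹ • (y - x)) * (L x)⁻¹ ^ d = 0 := by
    intro x hx y hy
    have hp : 0 < L x := by linarith [(hpos x hx).1]
    rw [h0, zero_mul]
    rw [norm_smul, Real.norm_of_nonneg (inv_nonneg.mpr hp.le), inv_mul_eq_div, one_le_div hp]
    exact hfar x hx y hy
  have hkint : ∀ x ∈ ball x₀ (R / 2), ∀ f : Euc d → ℝ, IntegrableOn f (ball x₀ (2 * R)) →
      IntegrableOn (fun y => Φ ((L x)⁻¹ • (y - x)) * (L x)⁻¹ ^ d * f y) Ω := by
    intro x hx f hf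
    have h1 : IntegrableOn (fun y => Φ ((L x)⁻¹ • (y - x)) * (L x)⁻¹ ^ d * f y)
        (ball x₀ (2 * R)) := by
      refine Integrable.bdd_mul (c := M * |(L x)⁻¹ ^ d|) hf (hkm x).aestronglyMeasurable ?_
      refine Filter.Eventually.of_forall fun y => ?_
      rw [norm_mul, Real.norm_eq_abs, Real.norm_eq_abs]
      gcongr
      exact hM _
    refine h1.of_forall_sdiff_eq_zero hΩ fun y hy => ?_
    rw [hk0 x hx y hy.2, zero_mul]
  have hci : ∀ c : ℝ, IntegrableOn (fun _ : Euc d => c) (ball x₀ (2 * R)) := fun c =>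
    integrableOn_const (by finiteness)
  set v : Euc d → ℝ := fun y => u y - u x₀ with hv
  have hvi : IntegrableOn v (ball x₀ (2 * R)) := hui.sub (hci _)
  have hnhds : ball x₀ (R / 2) ∈ 𝓝 x₀ := ball_mem_nhds _ (by linarith)
  have hx₀ : x₀ ∈ ball x₀ (R / 2) := mem_ball_self (by linarith)
  have hmain : HasFDerivAt
      (fun x => ∫ y in Ω, Φ ((L x)⁻¹ • (y - x)) * (L x)⁻¹ ^ d * v y)
      (∫ y in Ω, v y • kerD Φ (L x₀) (fderiv ℝ L x₀) (y - x₀)) x₀ := by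
    have hvm : AEStronglyMeasurable v (volume.restrict (ball x₀ (2 * R))) :=
      hvi.aestronglyMeasurable
    refine hasFDerivAt_integral_of_dominated_of_fderiv_le
      (F := fun x y => Φ ((L x)⁻¹ • (y - x)) * (L x)⁻¹ ^ d * v y)
      (F' := fun x y => v y • kerD Φ (L x) (fderiv ℝ L x) (y - x))
      (bound := (ball x₀ (2 * R)).indicator fun y =>
        (2 + d) * M * (R / 2)⁻¹ ^ (d + 1) * ‖v y‖) hnhds ?_ (hkint x₀ hx₀ v hvi) ?_ ?_ ?_ ?_
    · filter_upwards [hnhds] with x hx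
      exact (hkint x hx v hvi).aestronglyMeasurable
    · have hker : Measurable fun y => kerD Φ (L x₀) (fderiv ℝ L x₀) (y - x₀) :=
        (measurable_kerD hΦm _ _).comp (measurable_id.sub_const x₀)
      have h1 : AEStronglyMeasurable
          (fun y => v y • kerD Φ (L x₀) (fderiv ℝ L x₀) (y - x₀))
          (volume.restrict (ball x₀ (2 * R))) := hvm.smul hker.aestronglyMeasurable
      have h2 := (aestronglyMeasurable_indicator_iff measurableSet_ball).mpr h1
      refine (h2.congr (Filter.Eventually.of_forall fun y => ?_)).restrict
      by_cases hy : y ∈ ball x₀ (2 * R)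
      · simp [hy]
      · rw [indicator_of_notMem hy, kerD_eq_zero h0 h0' hR _ (hfar x₀ hx₀ y hy), smul_zero]
    · refine Filter.Eventually.of_forall fun y x hx => ?_
      have hp : 0 < L x := by linarith [(hpos x hx).1]
      by_cases hy : y ∈ ball x₀ (2 * R)
      · rw [indicator_of_mem hy, norm_smul, mul_comm]
        gcongr
        refine (norm_kerD_le hM hM' h0 h0' hp (hL x hx).2.2 _).trans ?_
        gcongr
        exact (hpos x hx).1
      · rw [indicator_of_notMem hy, kerD_eq_zero h0 h0' hp _ (hfar x hx y hy)]
        simp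
    · exact (IntegrableOn.integrable_indicator (hvi.norm.const_mul _)
        measurableSet_ball).integrableOn
    · refine Filter.Eventually.of_forall fun y x hx => ?_
      exact (hasFDerivAt_kernel hΦ (hL x hx).2.1 (by linarith [(hpos x hx).1])).mul_const (v y)
  refine ⟨∫ y in Ω, v y • kerD Φ (L x₀) (fderiv ℝ L x₀) (y - x₀), ?_, ?_⟩
  · refine (hmain.add_const (u x₀)).congr_of_eventuallyEq ?_
    filter_upwards [hnhds] with x hx
    have hp : 0 < L x := by linarith [(hpos x hx).1]
    have hmass := setIntegral_kernel h0 hint hp ((hballs x hx).trans hsub)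
    have hsplit : ∫ y in Ω, Φ ((L x)⁻¹ • (y - x)) * (L x)⁻¹ ^ d * v y =
        (∫ y in Ω, Φ ((L x)⁻¹ • (y - x)) * (L x)⁻¹ ^ d * u y) - u x₀ := by
      rw [← one_mul (u x₀), ← hmass, ← integral_mul_const,
        ← integral_sub (hkint x hx u hui) (hkint x hx _ (hci (u x₀)))]
      simp only [hv, mul_sub]
    rw [hsplit]; ring
  · refine (enorm_integral_le_lintegral_enorm _).trans ?_
    calc ∫⁻ y in Ω, ‖v y • kerD Φ R (fderiv ℝ L x₀) (y - x₀)‖ₑ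
        ≤ ∫⁻ y, (ball x₀ R).indicator (fun y =>
            ENNReal.ofReal ((2 + d) * M * R⁻¹ ^ (d + 1)) * ‖v y‖ₑ) y := by
          refine (setLIntegral_le_lintegral _ _).trans (lintegral_mono fun y => ?_)
          by_cases hy : y ∈ ball x₀ R
          · rw [indicator_of_mem hy, enorm_smul, mul_comm]
            gcongr
            rw [← ofReal_norm]
            exact ENNReal.ofReal_le_ofReal (norm_kerD_le hM hM' h0 h0' hR (hL x₀ hx₀).2.2 _)
          · have : R ≤ ‖y - x₀‖ := by
              rw [mem_ball, dist_eq_norm, not_lt] at hy; exact hy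
            rw [kerD_eq_zero h0 h0' hR _ this, smul_zero, ← ofReal_norm, norm_zero, ENNReal.ofReal_zero]
            exact zero_le
      _ = _ := by
          rw [lintegral_indicator measurableSet_ball, lintegral_const_mul' _ _ ENNReal.ofReal_ne_top]

/-! ### Constants, weights and local integrability -/

lemma rpow_le_two_rpow_abs_mul {a b : ℝ} (ha : 0 < a) (hb : 0 < b) (hab : a ≤ 2 * b)
    (hba : b ≤ 2 * a) (t : ℝ) : a ^ t ≤ 2 ^ |t| * b ^ t := by
  rcases le_total 0 t with ht | ht
  · rw [abs_of_nonneg ht, ← Real.mul_rpow (by norm_num) hb.le]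
    exact Real.rpow_le_rpow ha.le hab ht
  · have h1 : a ^ t ≤ (b / 2) ^ t := Real.rpow_le_rpow_of_nonpos (by linarith) (by linarith) ht
    refine h1.trans (le_of_eq ?_)
    rw [abs_of_nonpos ht, Real.div_rpow hb.le (by norm_num), Real.rpow_neg (by norm_num)]
    field_simp

lemma normC_pos {d : ℕ} (hd : 1 ≤ d) {p : ℝ} (hp : 1 < p) : 0 < normC d p := by
  have hd' : (0 : ℝ) < d := by exact_mod_cast hd
  have h1 : 0 < Real.Gamma (((d : ℝ) + p) / 2) := Real.Gamma_pos_of_pos (by linarith)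
  have h2 : 0 < Real.Gamma ((p + 1) / 2) := Real.Gamma_pos_of_pos (by linarith)
  have h3 : 0 < Real.Gamma ((d : ℝ) / 2) := Real.Gamma_pos_of_pos (by linarith)
  unfold normC Cbar sphArea
  positivity

/-- The powers of the radius `R` coming from the kernel gradient and from Jensen's inequality
combine to `R ^ (-(d + p))`, which is comparable to `r ^ (-(d + p))`. -/
lemma kernel_const_le (d : ℕ) {p a v κ R r : ℝ} (hp : 1 < p) (ha : 0 ≤ a) (hv : 0 ≤ v)
    (hκ : 1 ≤ κ) (hr : 0 < r) (hR : r / κ ≤ R) :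
    ENNReal.ofReal (a * R⁻¹ ^ (d + 1)) ^ p * (ENNReal.ofReal (R ^ d) * ENNReal.ofReal v) ^ (p - 1) ≤
      ENNReal.ofReal (a ^ p * v ^ (p - 1) * κ ^ ((d : ℝ) + p)) *
        ENNReal.ofReal (r ^ (-((d : ℝ) + p))) := by
  have hκ0 : 0 < κ := by linarith
  have hR0 : 0 < R := lt_of_lt_of_le (by positivity) hR
  have hd : (0 : ℝ) ≤ d := d.cast_nonneg
  rw [← ENNReal.ofReal_mul (by positivity),
    ENNReal.ofReal_rpow_of_nonneg (by positivity) (by linarith),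
    ENNReal.ofReal_rpow_of_nonneg (by positivity) (by linarith),
    ← ENNReal.ofReal_mul (by positivity), ← ENNReal.ofReal_mul (by positivity)]
  refine ENNReal.ofReal_le_ofReal ?_
  rw [Real.mul_rpow ha (by positivity), Real.mul_rpow (by positivity) hv]
  have e1 : (R⁻¹ ^ (d + 1)) ^ p * (R ^ d) ^ (p - 1) = R ^ (-((d : ℝ) + p)) := by
    rw [← Real.rpow_natCast, ← Real.rpow_natCast, Real.inv_rpow hR0.le, ← Real.rpow_neg hR0.le,
      ← Real.rpow_mul hR0.le, ← Real.rpow_mul hR0.le, ← Real.rpow_add hR0]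
    congr 1; push_cast; ring
  have e2 : R ^ (-((d : ℝ) + p)) ≤ κ ^ ((d : ℝ) + p) * r ^ (-((d : ℝ) + p)) := by
    refine (Real.rpow_le_rpow_of_nonpos (by positivity) hR (by linarith)).trans (le_of_eq ?_)
    rw [Real.div_rpow hr.le hκ0.le, Real.rpow_neg hκ0.le]
    field_simp
  calc a ^ p * (R⁻¹ ^ (d + 1)) ^ p * ((R ^ d) ^ (p - 1) * v ^ (p - 1))
      = a ^ p * v ^ (p - 1) * ((R⁻¹ ^ (d + 1)) ^ p * (R ^ d) ^ (p - 1)) := by ring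
    _ ≤ a ^ p * v ^ (p - 1) * (κ ^ ((d : ℝ) + p) * r ^ (-((d : ℝ) + p))) := by
        rw [e1]; gcongr
    _ = _ := by ring

/-- The weighted `p`-integrability on `Ω` gives integrability on compact subsets, where the weight
is bounded away from zero. -/
lemma integrableOn_of_weighted {d : ℕ} {Ω K : Set (Euc d)} {γ u : Euc d → ℝ} {p β : ℝ}
    (hp : 1 < p) (hK : IsCompact K) (hKΩ : K ⊆ Ω) (hγ : ∀ x ∈ Ω, 0 < γ x) (hγc : ContinuousOn γ Ω)
    (hu : Measurable u)
    (hfin : (∫⁻ x in Ω, ENNReal.ofReal (|u x| ^ p * γ x ^ (-β))) < ⊤) : IntegrableOn u K := by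
  obtain ⟨B, hB⟩ := hK.exists_bound_of_continuousOn
    ((hγc.mono hKΩ).rpow_const (p := β) fun x hx => Or.inl (hγ x (hKΩ hx)).ne')
  refine ⟨hu.aestronglyMeasurable, ?_⟩
  have hpt : ∀ x ∈ K, ‖u x‖ₑ ≤
      1 + ENNReal.ofReal B * ENNReal.ofReal (|u x| ^ p * γ x ^ (-β)) := by
    intro x hx
    have hg := hγ x (hKΩ hx)
    have hBx : γ x ^ β ≤ B := (le_abs_self _).trans (hB x hx)
    have hBn : 0 ≤ B := (Real.rpow_nonneg hg.le _).trans hBx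
    rw [← ENNReal.ofReal_mul hBn, ← ENNReal.ofReal_one,
      ← ENNReal.ofReal_add zero_le_one (by positivity), Real.enorm_eq_ofReal_abs]
    refine ENNReal.ofReal_le_ofReal ?_
    have h1 : |u x| ≤ 1 + |u x| ^ p := by
      rcases le_total |u x| 1 with h | h
      · have := Real.rpow_nonneg (abs_nonneg (u x)) p
        linarith
      · have := Real.self_le_rpow_of_one_le h hp.le
        linarith
    have h2 : |u x| ^ p = γ x ^ β * (|u x| ^ p * γ x ^ (-β)) := by
      rw [Real.rpow_neg hg.le]
      have := (Real.rpow_pos_of_pos hg β).ne'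
      field_simp
    calc |u x| ≤ 1 + γ x ^ β * (|u x| ^ p * γ x ^ (-β)) := by rw [← h2]; exact h1
      _ ≤ _ := by gcongr
  refine (setLIntegral_mono' hK.measurableSet hpt).trans_lt ?_
  rw [lintegral_add_left measurable_const, lintegral_const_mul' _ _ ENNReal.ofReal_ne_top]
  refine ENNReal.add_lt_top.mpr ⟨?_, ENNReal.mul_lt_top ENNReal.ofReal_lt_top
    ((lintegral_mono_set hKΩ).trans_lt hfin)⟩
  simpa using hK.measure_lt_top

/-- Inside `Ω`, a displacement shorter than `η x / (3 κ₀ κ₁)` changes `η` and `γ` by at most a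
factor `2`. For `γ` this uses `η ≤ dist (·, Γ) ≤ κ₀ γ`. -/
lemma weights_comparable {d : ℕ} {Ω : Set (Euc d)} {γ : Euc d → ℝ} {κ₀ κ₁ : ℝ} (hκ₀ : 1 ≤ κ₀)
    (hκ₁ : 1 ≤ κ₁) (hγη : ∀ x ∈ Ω, etaD Ω x ≤ κ₀ * γ x)
    (hγL : ∀ x ∈ Ω, ∀ y ∈ Ω, |γ x - γ y| ≤ κ₁ * ‖x - y‖) {x h : Euc d} (hx : x ∈ Ω)
    (hη : 0 < etaD Ω x) (hh : 3 * κ₀ * κ₁ * ‖h‖ ≤ etaD Ω x) :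
    x + h ∈ Ω ∧ etaD Ω x ≤ 2 * etaD Ω (x + h) ∧ etaD Ω (x + h) ≤ 2 * etaD Ω x ∧
      γ x ≤ 2 * γ (x + h) ∧ γ (x + h) ≤ 2 * γ x := by
  have hn := norm_nonneg h
  have h3 : 3 * ‖h‖ ≤ etaD Ω x := by
    have : 1 ≤ κ₀ * κ₁ := one_le_mul_of_one_le_of_one_le hκ₀ hκ₁
    nlinarith
  have hmem : x + h ∈ Ω := by
    by_contra hcon
    have := etaD_le_dist hx hcon
    simp only [dist_self_add_right] at this
    linarith
  have hd := abs_le.mp (etaD_lipschitz Ω x (x + h))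
  have hg := abs_le.mp (hγL x hx (x + h) hmem)
  simp only [sub_add_cancel_left, norm_neg] at hd hg
  have hgb : 3 * (κ₁ * ‖h‖) ≤ γ x := by
    have := hh.trans (hγη x hx)
    have hk : 0 < κ₀ := by linarith
    refine le_of_mul_le_mul_left ?_ hk
    linarith
  refine ⟨hmem, ?_, ?_, ?_, ?_⟩ <;> nlinarith

/-- The inner integral of the seminorm, written in terms of the displacement `z = y - x`. -/
lemma lintegral_ball_eq {d : ℕ} {u : Euc d → ℝ} (hu : Measurable u) (p : ℝ) (w : ℝ≥0∞) (x : Euc d)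
    (ρ : ℝ) : ∫⁻ z, (if ‖z‖ < ρ then w else 0) * ‖u (x + z) - u x‖ₑ ^ p =
      w * ∫⁻ y in ball x ρ, ‖u y - u x‖ₑ ^ p := by
  have hm : Measurable fun y => ‖u y - u x‖ₑ ^ p := by fun_prop
  rw [← lintegral_indicator measurableSet_ball,
    ← lintegral_const_mul _ (hm.indicator measurableSet_ball),
    ← lintegral_add_left_eq_self (fun y => w * (ball x ρ).indicator (fun y => ‖u y - u x‖ₑ ^ p) y) x]
  refine lintegral_congr fun z => ?_
  by_cases hz : ‖z‖ < ρ
  · rw [if_pos hz, indicator_of_mem (by simpa [mem_ball, dist_eq_norm] using hz)]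
  · rw [if_neg hz, indicator_of_notMem (by simpa [mem_ball, dist_eq_norm] using hz)]
    simp

/-! ### The gradient estimate -/

/-- **Weighted `L^p` gradient bound for the boundary-localized convolution.** Assuming in
addition that `ψ` is `C¹` on `ℝ` and `λ` is `C¹` on `Ω` with `|∇λ| ≤ κ₁`, there is a
constant `C₂` depending only on `d, p, β, ψ, κ₀, κ₁` such that for every admissible
setting, every `δ ∈ (0, 1/(3κ₀²κ₁))`, and every measurable `u` with
`∫_Ω |u|^p γ^{-β} < ∞`, the function `K_δ u` is differentiable on `Ω` and
`‖∇ K_δ u‖_{L^p(Ω;β)} ≤ C₂ [u]_{𝔚^p[δ](Ω;β)}`. -/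
theorem stmt9 (d : ℕ) (hd : 1 ≤ d) (p β κ₀ κ₁ : ℝ) (hp : 1 < p)
    (hκ₀ : 1 ≤ κ₀) (hκ₁ : 1 ≤ κ₁)
    (ψ : ℝ → ℝ) (hψnn : ∀ x, 0 ≤ ψ x) (hψC1 : ContDiff ℝ 1 ψ)
    (hψbdd : ∃ M : ℝ, ∀ x, ψ x ≤ M) (hψeven : ∀ x, ψ (-x) = ψ x)
    (hψmono : AntitoneOn ψ (Set.Ici 0)) (hψsupp : ∀ x : ℝ, 1 ≤ |x| → ψ x = 0)
    (b cψ : ℝ) (hb : 0 < b) (hcψ : cψ ∈ Set.Ioo (0 : ℝ) 1)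
    (hψlb : ∀ x ∈ Set.Icc (0 : ℝ) cψ, b ≤ ψ x)
    (hψnorm : ∫ x : Euc d, ψ ‖x‖ = 1) :
    ∃ C₂ : ℝ, 0 < C₂ ∧
      ∀ (Ωstar Γ : Set (Euc d)), IsOpen Ωstar → Bornology.IsBounded Ωstar →
        Γ.Finite → Γ.Nonempty → Γ ⊆ closure Ωstar →
        ∀ γ lam : Euc d → ℝ,
          (∀ x ∈ Ωstar \ Γ, 0 < γ x) →
          LipschitzOnWith (Real.toNNReal κ₁) γ (Ωstar \ Γ) →
          (∀ x ∈ Ωstar \ Γ, Metric.infDist x Γ ≤ κ₀ * γ x) →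
          (∀ x ∈ Ωstar \ Γ, 0 < lam x ∧
            κ₀⁻¹ * etaD (Ωstar \ Γ) x ≤ lam x ∧ lam x ≤ κ₀ * etaD (Ωstar \ Γ) x) →
          (∀ x ∈ Ωstar \ Γ, ∀ y ∈ Ωstar \ Γ, |lam x - lam y| ≤ κ₁ * ‖x - y‖) →
          ContDiffOn ℝ 1 lam (Ωstar \ Γ) →
          (∀ x ∈ Ωstar \ Γ, ‖fderivWithin ℝ lam (Ωstar \ Γ) x‖ ≤ κ₁) →
          ∀ δ : ℝ, 0 < δ → δ < 1 / (3 * κ₀ ^ 2 * κ₁) →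
          ∀ u : Euc d → ℝ, Measurable u →
            (∫⁻ x in Ωstar \ Γ, ENNReal.ofReal (|u x| ^ p * γ x ^ (-β))) < ⊤ →
            DifferentiableOn ℝ (Kconv d (Ωstar \ Γ) lam ψ δ u) (Ωstar \ Γ) ∧
            (∫⁻ x in Ωstar \ Γ,
                ENNReal.ofReal
                  (‖fderivWithin ℝ (Kconv d (Ωstar \ Γ) lam ψ δ u) (Ωstar \ Γ) x‖ ^ p *
                    γ x ^ (-β))) ^ (1 / p) ≤
              ENNReal.ofReal C₂ * semiW d (Ωstar \ Γ) γ p β δ u := by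
  obtain ⟨M, hM0, hΦM, hΦd, hΦM', hΦ0, hΦ0'⟩ :=
    radial_profile d hψnn hψC1 hψbdd hψeven hψmono hψsupp
  set Φ : Euc d → ℝ := fun z => ψ ‖z‖ with hΦdef
  have hp0 : 0 < p := by linarith
  have hκ₀0 : 0 < κ₀ := by linarith
  have hnc := normC_pos hd hp
  set N : ℕ := ⌈2 * κ₀⌉₊ with hNdef
  have hN : 2 * κ₀ ≤ N := Nat.le_ceil _
  have hN0 : 0 < N := Nat.ceil_pos.mpr (by linarith)
  have hNr : (0 : ℝ) < N := by exact_mod_cast hN0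
  set v : ℝ := (volume (ball (0 : Euc d) 1)).toReal with hvdef
  -- `A` is the constant of the pointwise gradient bound, `c` that of the comparison of weights at
  -- nearby points, and `T` the resulting constant for the `p`-th powers.
  set A : ℝ := ((2 + d) * M) ^ p * v ^ (p - 1) * κ₀ ^ ((d : ℝ) + p) with hA
  set c : ℝ≥0∞ := ENNReal.ofReal (2 ^ |(-β)| * 2 ^ |(-((d : ℝ) + p))|) with hc
  set T : ℝ≥0∞ := ENNReal.ofReal A * ((N : ℝ≥0∞) ^ (p - 1) * (N * (c *
    (ENNReal.ofReal ((N : ℝ) ^ d) * ENNReal.ofReal (normC d p)⁻¹)))) with hT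
  have hTtop : T ≠ ⊤ := by
    have : (N : ℝ≥0∞) ^ (p - 1) ≠ ⊤ :=
      ENNReal.rpow_ne_top_of_nonneg (by linarith) (ENNReal.natCast_ne_top N)
    rw [hT]
    finiteness
  refine ⟨(T.toReal + 1) ^ (1 / p), by positivity, ?_⟩
  intro Ωstar Γ hΩs _ hΓfin hΓne _ γ lam hγpos hγlip hγΓ hlam hlamL hlamC hlamD δ hδ hδlt u hu hufin
  have hΩo : IsOpen (Ωstar \ Γ) := hΩs.sdiff hΓfin.isClosed
  have hΓΩ : ∀ g ∈ Γ, g ∉ Ωstar \ Γ := fun g hg h => h.2 hg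
  set Ω := Ωstar \ Γ with hΩdef
  have hΩm : MeasurableSet Ω := hΩo.measurableSet
  have hγc : ContinuousOn γ Ω := hγlip.continuousOn
  have hγL : ∀ x ∈ Ω, ∀ y ∈ Ω, |γ x - γ y| ≤ κ₁ * ‖x - y‖ := by
    intro x hx y hy
    have := hγlip.dist_le_mul x hx y hy
    rwa [Real.dist_eq, dist_eq_norm, Real.coe_toNNReal _ (by linarith)] at this
  have hγη : ∀ x ∈ Ω, etaD Ω x ≤ κ₀ * γ x := fun x hx =>
    ((le_infDist hΓne).mpr fun g hg => etaD_le_dist hx (hΓΩ g hg)).trans (hγΓ x hx)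
  have hηpos : ∀ x ∈ Ω, 0 < etaD Ω x := fun x hx =>
    pos_of_mul_pos_right ((hlam x hx).1.trans_le (hlam x hx).2.2) hκ₀0.le
  have hδ' : 3 * κ₀ ^ 2 * κ₁ * δ ≤ 1 := by
    rw [lt_div_iff₀ (by positivity)] at hδlt
    linarith
  have hδκ₁ : δ * κ₁ ≤ 1 / 3 := by
    have h1 : 1 ≤ κ₀ ^ 2 := one_le_pow₀ hκ₀
    have h2 : 0 < κ₁ * δ := by positivity
    nlinarith
  have hδκ₀ : 3 * (δ * κ₀) ≤ 1 := by
    have h1 : 1 ≤ κ₀ * κ₁ := one_le_mul_of_one_le_of_one_le hκ₀ hκ₁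
    have h2 : 0 < κ₀ * δ := by positivity
    nlinarith
  have hηc : Continuous (etaD Ω) := continuous_infDist_pt _
  set r : Euc d → ℝ := fun x => δ * etaD Ω x with hr
  have hrm : Measurable r := (hηc.const_smul δ).measurable
  have hrpos : ∀ x ∈ Ω, 0 < r x := fun x hx => mul_pos hδ (hηpos x hx)
  set W : Euc d → ℝ≥0∞ :=
    Ω.indicator fun x => ENNReal.ofReal (γ x ^ (-β) * r x ^ (-((d : ℝ) + p))) with hW
  have hWm : Measurable W := by
    have hco : ContinuousOn (fun x => ENNReal.ofReal (γ x ^ (-β) * r x ^ (-((d : ℝ) + p)))) Ω := by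
      refine ENNReal.continuous_ofReal.comp_continuousOn (ContinuousOn.mul ?_ ?_)
      · exact hγc.rpow_const fun x hx => Or.inl (hγpos x hx).ne'
      · exact ((hηc.const_smul δ).continuousOn).rpow_const fun x hx => Or.inl (hrpos x hx).ne'
    classical
    rw [hW, ← Set.piecewise_eq_indicator]
    exact hco.measurable_piecewise continuousOn_const hΩm
  -- The enlarged seminorm, with radius `κ₀ δ η`, is controlled by the seminorm with radius `δ η`.
  have hchain : ∫⁻ x, W x * ∫⁻ y in ball x (κ₀ * r x), ‖u y - u x‖ₑ ^ p ≤
      (N : ℝ≥0∞) ^ (p - 1) * (N * (c * (ENNReal.ofReal ((N : ℝ) ^ d) *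
        ∫⁻ x, W x * ∫⁻ y in ball x (r x), ‖u y - u x‖ₑ ^ p))) := by
    have hG₂ : Measurable (Function.uncurry fun x z : Euc d => if ‖z‖ < r x then W x else 0) := by
      refine Measurable.ite (measurableSet_lt (by fun_prop) (hrm.comp measurable_fst))
        (hWm.comp measurable_fst) measurable_const
    have := chaining hp.le hu hN0 c
      (G₁ := fun x z => if ‖z‖ < κ₀ * r x then W x else 0) hG₂ ?_
    · simpa only [lintegral_ball_eq hu] using this
    intro x z s hs
    by_cases hz : ‖z‖ < κ₀ * r x
    swap
    · rw [if_neg hz]; exact zero_le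
    rw [if_pos hz]
    by_cases hx : x ∈ Ω
    swap
    · rw [hW, indicator_of_notMem hx]; exact zero_le
    have hη := hηpos x hx
    have hsz : ‖s • z‖ ≤ ‖z‖ := by
      rw [norm_smul, Real.norm_of_nonneg hs.1]
      exact mul_le_of_le_one_left (norm_nonneg _) hs.2
    have hsmall : 3 * κ₀ * κ₁ * ‖s • z‖ ≤ etaD Ω x := by
      calc 3 * κ₀ * κ₁ * ‖s • z‖ ≤ 3 * κ₀ * κ₁ * (κ₀ * (δ * etaD Ω x)) := by
            gcongr; exact hsz.trans hz.le
        _ = (3 * κ₀ ^ 2 * κ₁ * δ) * etaD Ω x := by ring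
        _ ≤ 1 * etaD Ω x := by gcongr
        _ = _ := one_mul _
    obtain ⟨hx', e1, e2, g1, g2⟩ := weights_comparable hκ₀ hκ₁ hγη hγL hx hη hsmall
    have hr1 : r x ≤ 2 * r (x + s • z) := by simp only [hr]; nlinarith
    have hr2 : r (x + s • z) ≤ 2 * r x := by simp only [hr]; nlinarith
    rw [if_pos, hW, indicator_of_mem hx, indicator_of_mem hx', hc,
      ← ENNReal.ofReal_mul (by positivity)]
    · refine ENNReal.ofReal_le_ofReal ?_
      have := rpow_le_two_rpow_abs_mul (hγpos x hx) (hγpos _ hx') g1 g2 (-β)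
      have := rpow_le_two_rpow_abs_mul (hrpos x hx) (hrpos _ hx') hr1 hr2 (-((d : ℝ) + p))
      have h3 := (hγpos x hx).le
      have h4 := (hγpos _ hx').le
      have h5 := (hrpos x hx).le
      calc _ ≤ (2 ^ |(-β)| * γ (x + s • z) ^ (-β)) *
            (2 ^ |(-((d : ℝ) + p))| * r (x + s • z) ^ (-((d : ℝ) + p))) := by gcongr
        _ = _ := by ring
    · rw [norm_smul, Real.norm_of_nonneg (by positivity), inv_mul_lt_iff₀ hNr]
      have := hrpos _ hx'
      calc ‖z‖ < κ₀ * r x := hz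
        _ ≤ κ₀ * (2 * r (x + s • z)) := by gcongr
        _ = 2 * κ₀ * r (x + s • z) := by ring
        _ ≤ N * r (x + s • z) := by gcongr
  have henergy : ∫⁻ x, W x * ∫⁻ y in ball x (r x), ‖u y - u x‖ₑ ^ p =
      ENNReal.ofReal (normC d p)⁻¹ * nlEnergy d Ω γ p β δ u := by
    unfold nlEnergy
    rw [← mul_assoc, ← ENNReal.ofReal_mul (by positivity), inv_mul_cancel₀ hnc.ne',
      ENNReal.ofReal_one, one_mul, ← lintegral_indicator hΩm]
    refine lintegral_congr fun x => ?_
    by_cases hx : x ∈ Ω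
    · rw [hW, indicator_of_mem hx, indicator_of_mem hx,
        ← lintegral_const_mul' _ _ ENNReal.ofReal_ne_top]
      refine lintegral_congr fun y => ?_
      have h1 := (hγpos x hx).le
      have h2 := (hrpos x hx).le
      rw [Real.enorm_eq_ofReal_abs, ENNReal.ofReal_rpow_of_nonneg (abs_nonneg _) hp0.le,
        ← ENNReal.ofReal_mul (by positivity), Real.rpow_neg h2]
      congr 1
      simp only [hr]
      ring
    · rw [hW, indicator_of_notMem hx, indicator_of_notMem hx, zero_mul]
  have hRr : ∀ x ∈ Ω, r x / κ₀ ≤ δ * lam x ∧ δ * lam x ≤ κ₀ * r x := by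
    intro x hx
    obtain ⟨-, h1, h2⟩ := hlam x hx
    constructor
    · calc r x / κ₀ = δ * (κ₀⁻¹ * etaD Ω x) := by simp only [hr]; ring
        _ ≤ _ := by gcongr
    · calc δ * lam x ≤ δ * (κ₀ * etaD Ω x) := by gcongr
        _ = _ := by simp only [hr]; ring
  have hball : ∀ x ∈ Ω, ball x (etaD Ω x) ⊆ Ω := by
    intro x hx y hy
    by_contra hcon
    have := etaD_le_dist hx hcon
    rw [mem_ball, dist_comm] at hy
    linarith
  have hmain : ∀ x ∈ Ω, ∃ D : Euc d →L[ℝ] ℝ, HasFDerivAt (Kconv d Ω lam ψ δ u) D x ∧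
      ‖D‖ₑ ≤ ENNReal.ofReal ((2 + d) * M * (δ * lam x)⁻¹ ^ (d + 1)) *
        ∫⁻ y in ball x (δ * lam x), ‖u y - u x‖ₑ := by
    intro x hx
    have hη := hηpos x hx
    have hRpos : 0 < δ * lam x := mul_pos hδ (hlam x hx).1
    have hRη : 3 * (δ * lam x) ≤ etaD Ω x := by
      calc 3 * (δ * lam x) ≤ 3 * (κ₀ * r x) :=
            mul_le_mul_of_nonneg_left (hRr x hx).2 (by norm_num)
        _ = 3 * (δ * κ₀) * etaD Ω x := by simp only [hr]; ring
        _ ≤ 1 * etaD Ω x := by gcongr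
        _ = _ := one_mul _
    have hcb : closedBall x (2 * (δ * lam x)) ⊆ Ω :=
      (closedBall_subset_ball (by linarith)).trans (hball x hx)
    have hui : IntegrableOn u (ball x (2 * (δ * lam x))) :=
      (integrableOn_of_weighted hp (isCompact_closedBall _ _) hcb hγpos hγc hu hufin).mono_set
        ball_subset_closedBall
    have hL : ∀ x' ∈ ball x (δ * lam x / 2), |δ * lam x' - δ * lam x| ≤ δ * lam x / 2 ∧
        DifferentiableAt ℝ (fun x => δ * lam x) x' ∧
        ‖fderiv ℝ (fun x => δ * lam x) x'‖ ≤ 1 := by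
      intro x' hx'
      have hx'Ω : x' ∈ Ω := hcb (ball_subset_closedBall (ball_subset_ball (by linarith) hx'))
      have hdl : DifferentiableAt ℝ lam x' :=
        (hlamC.differentiableOn one_ne_zero).differentiableAt (hΩo.mem_nhds hx'Ω)
      refine ⟨?_, hdl.const_mul δ, ?_⟩
      · rw [← mul_sub, abs_mul, abs_of_pos hδ]
        have h1 := hlamL x' hx'Ω x hx
        rw [mem_ball, dist_eq_norm] at hx'
        calc δ * |lam x' - lam x| ≤ δ * (κ₁ * ‖x' - x‖) := by gcongr
          _ = (δ * κ₁) * ‖x' - x‖ := by ring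
          _ ≤ 1 * (δ * lam x / 2) := by gcongr; linarith
          _ = _ := one_mul _
      · rw [fderiv_const_mul hdl, norm_smul, Real.norm_of_nonneg hδ.le]
        have := hlamD x' hx'Ω
        rw [fderivWithin_of_isOpen hΩo hx'Ω] at this
        calc δ * ‖fderiv ℝ lam x'‖ ≤ δ * κ₁ := by gcongr
          _ ≤ 1 := by linarith
    obtain ⟨D, hD, hDn⟩ := hasFDerivAt_convolution hΦM hΦd hΦM' hΦ0 hΦ0' hψnorm hΩm
      (L := fun x => δ * lam x) (x₀ := x) hRpos (ball_subset_closedBall.trans hcb) hL hui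
    refine ⟨D, hD.congr_of_eventuallyEq ?_, hDn⟩
    filter_upwards [hΩo.mem_nhds hx] with x' hx'
    have hp' : 0 < δ * lam x' := mul_pos hδ (hlam x' hx').1
    unfold Kconv
    refine integral_congr_ae (Filter.Eventually.of_forall fun y => ?_)
    simp only [norm_smul, Real.norm_of_nonneg (inv_nonneg.mpr hp'.le), div_eq_mul_inv,
      inv_pow, mul_comm (δ * lam x')⁻¹]
  have hgrad : ∫⁻ x in Ω, ENNReal.ofReal
      (‖fderivWithin ℝ (Kconv d Ω lam ψ δ u) Ω x‖ ^ p * γ x ^ (-β)) ≤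
      ENNReal.ofReal A * ∫⁻ x, W x * ∫⁻ y in ball x (κ₀ * r x), ‖u y - u x‖ₑ ^ p := by
    rw [← lintegral_const_mul' _ _ ENNReal.ofReal_ne_top, ← lintegral_indicator hΩm]
    refine lintegral_mono fun x => ?_
    by_cases hx : x ∈ Ω
    swap
    · rw [indicator_of_notMem hx]; exact zero_le
    obtain ⟨D, hD, hDn⟩ := hmain x hx
    have hRpos : 0 < δ * lam x := mul_pos hδ (hlam x hx).1
    have hgx := (hγpos x hx).le
    rw [indicator_of_mem hx, hW, indicator_of_mem hx, fderivWithin_of_isOpen hΩo hx, hD.fderiv,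
      ENNReal.ofReal_mul (by positivity), ← ENNReal.ofReal_rpow_of_nonneg (norm_nonneg _) hp0.le,
      ofReal_norm]
    have hJ := lintegral_rpow_le (volume.restrict (ball x (δ * lam x))) hp
      (f := fun y => ‖u y - u x‖ₑ) (by fun_prop)
    rw [Measure.restrict_apply_univ, Measure.addHaar_ball_of_pos _ _ hRpos, finrank_euclideanSpace,
      Fintype.card_fin, ← ENNReal.ofReal_toReal (measure_ball_lt_top (x := (0 : Euc d))).ne] at hJ
    have hI : ∫⁻ y in ball x (δ * lam x), ‖u y - u x‖ₑ ^ p ≤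
        ∫⁻ y in ball x (κ₀ * r x), ‖u y - u x‖ₑ ^ p :=
      lintegral_mono_set (ball_subset_ball (hRr x hx).2)
    have hK := kernel_const_le d (a := (2 + d) * M) (v := v) hp (by positivity)
      ENNReal.toReal_nonneg hκ₀ (hrpos x hx) (hRr x hx).1
    calc ‖D‖ₑ ^ p * ENNReal.ofReal (γ x ^ (-β))
        ≤ (ENNReal.ofReal ((2 + d) * M * (δ * lam x)⁻¹ ^ (d + 1)) ^ p *
            ((ENNReal.ofReal ((δ * lam x) ^ d) * ENNReal.ofReal v) ^ (p - 1) *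
              ∫⁻ y in ball x (κ₀ * r x), ‖u y - u x‖ₑ ^ p)) * ENNReal.ofReal (γ x ^ (-β)) := by
          gcongr
          refine (ENNReal.rpow_le_rpow hDn hp0.le).trans ?_
          rw [ENNReal.mul_rpow_of_nonneg _ _ hp0.le]
          gcongr
          exact hJ.trans (by gcongr)
      _ ≤ (ENNReal.ofReal A * ENNReal.ofReal (r x ^ (-((d : ℝ) + p))) *
            ∫⁻ y in ball x (κ₀ * r x), ‖u y - u x‖ₑ ^ p) * ENNReal.ofReal (γ x ^ (-β)) := by
          rw [← mul_assoc]
          gcongr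
      _ = _ := by
          rw [ENNReal.ofReal_mul (p := γ x ^ (-β)) (by positivity)]
          ring
  refine ⟨fun x hx => ?_, ?_⟩
  · obtain ⟨D, hD, -⟩ := hmain x hx
    exact hD.differentiableAt.differentiableWithinAt
  have hfinal : ∫⁻ x in Ω, ENNReal.ofReal
      (‖fderivWithin ℝ (Kconv d Ω lam ψ δ u) Ω x‖ ^ p * γ x ^ (-β)) ≤
      T * nlEnergy d Ω γ p β δ u := by
    refine (hgrad.trans (mul_le_mul_right hchain _)).trans (le_of_eq ?_)
    rw [henergy, hT]
    ring
  refine (ENNReal.rpow_le_rpow hfinal (by positivity)).trans ?_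
  unfold semiW
  rw [ENNReal.mul_rpow_of_nonneg _ _ (by positivity),
    ← ENNReal.ofReal_rpow_of_nonneg (by positivity) (by positivity)]
  gcongr
  rw [← ENNReal.ofReal_toReal hTtop, ENNReal.toReal_ofReal ENNReal.toReal_nonneg]
  exact ENNReal.ofReal_le_ofReal (by linarith)

end
end

section
/- Assume the domain, weight and localization setting below with d ≥ 1, set κ := κ₀²κ₁, and fix z ∈ ℝ^d with |z| < 1 and ε ∈ (0, 1/(3κ)). Define ζ(x) := x + ε·λ(x)·z for x ∈ Ω. Then for all x, y ∈ Ω: (i) ζ(x) ∈ Ω; (ii) (1−κε)·η(x) ≤ η(ζ(x)) ≤ (1+κε)·η(x); (iii) (1−κε)·γ(x) ≤ γ(ζ(x)) ≤ (1+κε)·γ(x); (iv) (1−κε)·|x−y| ≤ |ζ(x)−ζ(y)| ≤ (1+κε)·|x−y|. -/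
/-!
The displacement `ζ x - x` has length at most `ε λ(x) ≤ κ₀ ε η(x)`, which is less than `η(x)`, and
the ball of radius `η(x)` about `x` is connected and misses `∂Ω`, so it lies in `Ω`
(`mem_of_dist_lt_etaD`); this gives (i). As `η` is `1`-Lipschitz, (ii) follows. In dimension
`d ≥ 1` the finite set `Γ` has dense complement, so every point of `Γ` is a boundary point of
`Ω = Ω* \ Γ` (`subset_frontier_diff`); hence `η ≤ dist(·, Γ) ≤ κ₀ γ`, and the Lipschitz bound on `γ`
gives `|γ(ζ x) - γ(x)| ≤ κ₁ ε λ(x) ≤ κ₀² κ₁ ε γ(x)`, which is (iii). Finally (iv) is the triangle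
inequality, since `ζ - id` is Lipschitz with constant `ε κ₁ ≤ κ ε`.
-/

open MeasureTheory Metric Set Filter
open scoped ENNReal NNReal Topology

noncomputable section

/-- Removing a finite set `Γ ⊆ closure U` from an open set `U` of positive-dimensional space leaves
every point of `Γ` in the boundary. -/
lemma subset_frontier_diff {d : ℕ} (hd : 1 ≤ d) {U Γ : Set (Euc d)} (hU : IsOpen U)
    (hΓ : Γ.Finite) (hsub : Γ ⊆ closure U) : Γ ⊆ frontier (U \ Γ) := by
  have : Nonempty (Fin d) := ⟨⟨0, hd⟩⟩
  have hdense : Dense Γᶜ := hΓ.countable.dense_compl ℝ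
  have hcl : closure U ⊆ closure (U \ Γ) :=
    closure_minimal (hdense.open_subset_closure_inter hU) isClosed_closure
  intro p hp
  rw [(hU.sdiff hΓ.isClosed).frontier_eq]
  exact ⟨hcl (hsub hp), fun h => h.2 hp⟩

/-- The ball of radius `η(x)` about a point `x ∈ Ω` lies in `Ω`: it is connected and covered by the
disjoint open sets `interior Ω` and `(closure Ω)ᶜ`, the first of which contains `x`. -/
lemma mem_of_dist_lt_etaD {d : ℕ} {Ω : Set (Euc d)} {x w : Euc d} (hx : x ∈ Ω)
    (hw : dist w x < etaD Ω x) : w ∈ Ω := by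
  have hr : 0 < etaD Ω x := dist_nonneg.trans_lt hw
  have hfr : ∀ q ∈ ball x (etaD Ω x), q ∉ frontier Ω := fun q hq hqf => by
    have h1 : etaD Ω x ≤ dist x q := infDist_le_dist_of_mem hqf
    rw [mem_ball, dist_comm] at hq
    exact absurd hq (not_lt.mpr h1)
  have hcover : ball x (etaD Ω x) ⊆ interior Ω ∪ (closure Ω)ᶜ := fun q hq => by
    by_contra h
    rw [mem_union, not_or, mem_compl_iff, not_not] at h
    exact hfr q hq ⟨h.2, h.1⟩
  have hxi : x ∈ interior Ω :=
    (hcover (mem_ball_self hr)).resolve_right fun h => h (subset_closure hx)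
  by_contra hwΩ
  have hwc : w ∈ (closure Ω)ᶜ := (hcover hw).resolve_left fun h => hwΩ (interior_subset h)
  obtain ⟨q, -, hqi, hqc⟩ := (convex_ball x (etaD Ω x)).isPreconnected _ _ isOpen_interior
    isClosed_closure.isOpen_compl hcover ⟨x, mem_ball_self hr, hxi⟩ ⟨w, hw, hwc⟩
  exact hqc (subset_closure (interior_subset hqi))

/-- **Properties of the coordinate change `ζ(x) = x + ελ(x)z`.** With `κ := κ₀²κ₁`, for
`|z| < 1` and `ε ∈ (0,1/(3κ))`, for all `x, y ∈ Ω`: `ζ(x) ∈ Ω`,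
`(1-κε)η(x) ≤ η(ζ(x)) ≤ (1+κε)η(x)`, `(1-κε)γ(x) ≤ γ(ζ(x)) ≤ (1+κε)γ(x)`, and
`(1-κε)|x-y| ≤ |ζ(x)-ζ(y)| ≤ (1+κε)|x-y|`. -/
theorem stmt11 (d : ℕ) (hd : 1 ≤ d) (κ₀ κ₁ κ : ℝ)
    (hκ₀ : 1 ≤ κ₀) (hκ₁ : 1 ≤ κ₁) (hκ : κ = κ₀ ^ 2 * κ₁)
    (Ωstar Γ : Set (Euc d)) (hΩopen : IsOpen Ωstar) (hΩbdd : Bornology.IsBounded Ωstar)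
    (hΓfin : Γ.Finite) (hΓne : Γ.Nonempty) (hΓsub : Γ ⊆ closure Ωstar)
    (γ : Euc d → ℝ) (hγpos : ∀ x ∈ Ωstar \ Γ, 0 < γ x)
    (hγlip : LipschitzOnWith (Real.toNNReal κ₁) γ (Ωstar \ Γ))
    (hγdist : ∀ x ∈ Ωstar \ Γ, Metric.infDist x Γ ≤ κ₀ * γ x)
    (lam : Euc d → ℝ)
    (hlam : ∀ x ∈ Ωstar \ Γ, 0 < lam x ∧
      κ₀⁻¹ * etaD (Ωstar \ Γ) x ≤ lam x ∧ lam x ≤ κ₀ * etaD (Ωstar \ Γ) x)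
    (hlamlip : ∀ x ∈ Ωstar \ Γ, ∀ y ∈ Ωstar \ Γ, |lam x - lam y| ≤ κ₁ * ‖x - y‖)
    (z : Euc d) (hz : ‖z‖ < 1) (ε : ℝ) (hε : ε ∈ Set.Ioo (0 : ℝ) (1 / (3 * κ)))
    (ζ : Euc d → Euc d) (hζ : ∀ x, ζ x = x + (ε * lam x) • z) :
    ∀ x ∈ Ωstar \ Γ, ∀ y ∈ Ωstar \ Γ,
      ζ x ∈ Ωstar \ Γ ∧
      ((1 - κ * ε) * etaD (Ωstar \ Γ) x ≤ etaD (Ωstar \ Γ) (ζ x) ∧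
        etaD (Ωstar \ Γ) (ζ x) ≤ (1 + κ * ε) * etaD (Ωstar \ Γ) x) ∧
      ((1 - κ * ε) * γ x ≤ γ (ζ x) ∧ γ (ζ x) ≤ (1 + κ * ε) * γ x) ∧
      ((1 - κ * ε) * ‖x - y‖ ≤ ‖ζ x - ζ y‖ ∧ ‖ζ x - ζ y‖ ≤ (1 + κ * ε) * ‖x - y‖) := by
  obtain ⟨hε0, hε1⟩ := hε
  have hκ₀κ : κ₀ ≤ κ := by rw [hκ]; nlinarith [mul_nonneg (sub_nonneg.2 hκ₀) (sub_nonneg.2 hκ₁)]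
  have hκ₁κ : κ₁ ≤ κ := by rw [hκ]; exact le_mul_of_one_le_left (by linarith) (one_le_pow₀ hκ₀)
  have hκpos : 0 < κ := by linarith
  have hκε : κ * ε < 1 := by
    rw [lt_div_iff₀ (by positivity)] at hε1
    nlinarith
  have hΓfr : Γ ⊆ frontier (Ωstar \ Γ) := subset_frontier_diff hd hΩopen hΓfin hΓsub
  intro x hx y hy
  obtain ⟨hlpos, -, hlle⟩ := hlam x hx
  have hηpos : 0 < etaD (Ωstar \ Γ) x := by
    by_contra! h
    nlinarith
  have hdisp : dist (ζ x) x ≤ ε * lam x := by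
    rw [dist_eq_norm, hζ, add_sub_cancel_left, norm_smul, Real.norm_eq_abs,
      abs_of_pos (mul_pos hε0 hlpos)]
    exact mul_le_of_le_one_right (mul_pos hε0 hlpos).le hz.le
  have hlη : ε * lam x ≤ ε * (κ₀ * etaD (Ωstar \ Γ) x) := by gcongr
  have hdη : dist (ζ x) x ≤ κ * ε * etaD (Ωstar \ Γ) x := by
    have : ε * (κ₀ * etaD (Ωstar \ Γ) x) ≤ ε * (κ * etaD (Ωstar \ Γ) x) := by gcongr
    linarith
  have hmem : ζ x ∈ Ωstar \ Γ := mem_of_dist_lt_etaD hx (hdη.trans_lt (by nlinarith))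
  refine ⟨hmem, ?_, ?_, ?_⟩
  · have h1 : etaD (Ωstar \ Γ) x ≤ etaD (Ωstar \ Γ) (ζ x) + dist x (ζ x) :=
      infDist_le_infDist_add_dist
    have h2 : etaD (Ωstar \ Γ) (ζ x) ≤ etaD (Ωstar \ Γ) x + dist (ζ x) x :=
      infDist_le_infDist_add_dist
    rw [dist_comm] at h1
    constructor <;> linarith
  · have hηγ : etaD (Ωstar \ Γ) x ≤ κ₀ * γ x :=
      (infDist_le_infDist_of_subset hΓfr hΓne).trans (hγdist x hx)
    have hL := hγlip.dist_le_mul _ hmem _ hx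
    rw [Real.coe_toNNReal _ (by linarith), Real.dist_eq] at hL
    have h1 : |γ (ζ x) - γ x| ≤ κ * ε * γ x := calc
      |γ (ζ x) - γ x| ≤ κ₁ * dist (ζ x) x := hL
      _ ≤ κ₁ * (ε * (κ₀ * (κ₀ * γ x))) := by
        gcongr
        exact (hdisp.trans hlη).trans (by gcongr)
      _ = κ * ε * γ x := by rw [hκ]; ring
    rw [abs_le] at h1
    constructor <;> linarith [h1.1, h1.2]
  · have heq : ζ x - ζ y = (x - y) + (ε * (lam x - lam y)) • z := by
      rw [hζ, hζ, mul_sub, sub_smul]; abel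
    have hb : ‖(ε * (lam x - lam y)) • z‖ ≤ κ * ε * ‖x - y‖ := by
      rw [norm_smul, Real.norm_eq_abs, abs_mul, abs_of_pos hε0]
      calc ε * |lam x - lam y| * ‖z‖ ≤ ε * |lam x - lam y| :=
            mul_le_of_le_one_right (by positivity) hz.le
        _ ≤ ε * (κ * ‖x - y‖) := by
            gcongr
            exact (hlamlip x hx y hy).trans (by gcongr)
        _ = κ * ε * ‖x - y‖ := by ring
    rw [heq]
    have h1 := norm_add_le (x - y) ((ε * (lam x - lam y)) • z)
    have h2 := norm_sub_le_norm_add (x - y) ((ε * (lam x - lam y)) • z)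
    constructor <;> linarith

end
end
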